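/- Let α > 3 and m > 0 be real numbers, and let f(x) = (α-1)·m^{α-1}·x^{-α} for x ≥ m be the continuous power-law density with exponent α and minimal degree m, with moments ⟨k⟩ = ∫_m^∞ x·f(x) dx and ⟨k²⟩ = ∫_m^∞ x²·f(x) dx. Then 1 - (⟨k⟩/(⟨k²⟩ - ⟨k⟩))² = 1 - [((2-α)/(3-α))·m - 1]^{-2}; that is, for continuous power-law networks with exponent α > 3 and size tending towards infinity, the fraction of links removed at the threshold p_c for random node failures is m(p_c) = 1 - [((2-α)/(3-α))m - 1]^{-2}. -/

import Mathlib

open MeasureTheory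

/-!
The `n`-th moment of the power-law density is `(α - 1) / (α - 1 - n) * m ^ n` whenever
`n + 1 < α` (`power_law_moment`). Hence `⟨k²⟩ = ⟨k⟩ * ((2 - α) / (3 - α) * m)`, so
`⟨k²⟩ - ⟨k⟩ = ⟨k⟩ * ((2 - α) / (3 - α) * m - 1)`, and the nonzero factor `⟨k⟩` cancels in
`⟨k⟩ / (⟨k²⟩ - ⟨k⟩)`.
-/

theorem power_law_moment (α m : ℝ) (hm : 0 < m) (n : ℕ) (hn : (n : ℝ) + 1 < α) :
    ∫ x in Set.Ici m, x ^ n * ((α - 1) * m ^ (α - 1) * x ^ (-α))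
      = (α - 1) / (α - 1 - n) * m ^ n := by
  have hcongr : ∀ x ∈ Set.Ioi m, x ^ n * ((α - 1) * m ^ (α - 1) * x ^ (-α))
      = (α - 1) * m ^ (α - 1) * x ^ ((n : ℝ) - α) := by
    intro x hx
    have hx0 : 0 < x := hm.trans hx
    rw [sub_eq_add_neg (n : ℝ) α, Real.rpow_add hx0, Real.rpow_natCast]
    ring
  rw [integral_Ici_eq_integral_Ioi, setIntegral_congr_fun measurableSet_Ioi hcongr,
    integral_const_mul, integral_Ioi_rpow_of_lt (by linarith) hm]
  have hpow : m ^ (α - 1) * m ^ ((n : ℝ) - α + 1) = m ^ n := by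
    rw [← Real.rpow_add hm, ← Real.rpow_natCast]
    congr 1
    ring
  have hd : α - 1 - n ≠ 0 := by linarith
  have hneg : (n : ℝ) - α + 1 = -(α - 1 - n) := by ring
  rw [← hpow, neg_div, hneg, div_neg, neg_neg]
  ring

/-- Fraction of links removed at the threshold for random node failures in
infinite continuous power-law networks with exponent `α > 3` and minimal degree
`m`: `m(p_c) = 1 - [((2-α)/(3-α))m - 1]⁻²`. -/
theorem continuous_power_law_link_fraction_at_threshold (α m : ℝ)
    (hα : 3 < α) (hm : 0 < m) :
    1 - ((∫ x in Set.Ici m, x * ((α - 1) * m ^ (α - 1) * x ^ (-α)))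
        / ((∫ x in Set.Ici m, x ^ 2 * ((α - 1) * m ^ (α - 1) * x ^ (-α)))
          - ∫ x in Set.Ici m, x * ((α - 1) * m ^ (α - 1) * x ^ (-α)))) ^ 2
      = 1 - (((2 - α) / (3 - α) * m - 1)⁻¹) ^ 2 := by
  have h1 := power_law_moment α m hm 1 (by norm_num; linarith)
  have h2 := power_law_moment α m hm 2 (by norm_num; linarith)
  simp only [pow_one, Nat.cast_one, Nat.cast_ofNat] at h1 h2
  rw [h1, h2]
  have ha1 : α - 1 ≠ 0 := by linarith
  have ha2 : α - 1 - 1 ≠ 0 := by linarith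
  have ha3 : α - 1 - 2 ≠ 0 := by linarith
  have ha3' : 3 - α ≠ 0 := by linarith
  have hk : (α - 1) / (α - 1 - 1) * m ≠ 0 :=
    mul_ne_zero (div_ne_zero ha1 ha2) hm.ne'
  have hfac : (α - 1) / (α - 1 - 2) * m ^ 2 - (α - 1) / (α - 1 - 1) * m
      = (α - 1) / (α - 1 - 1) * m * ((2 - α) / (3 - α) * m - 1) := by
    have hratio : (2 - α) / (3 - α) = (α - 1 - 1) / (α - 1 - 2) := by
      rw [div_eq_div_iff ha3' ha3]
      ring
    rw [hratio]
    field_simp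
  -- Cancelling the nonzero factor `⟨k⟩` stays valid when the other factor vanishes,
  -- since both sides then take the value `0⁻¹ = 0`.
  rw [hfac, div_mul_cancel_left₀ hk]
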